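/- There exist universal constants c > 0, γ₁ > 0, γ₂ > 0 such that for all sufficiently large n the following holds. Let k be a positive integer with k ≤ n/32, let v ∈ ℝⁿ be a nonzero vector with ‖v‖₀ ≤ c·n/(√k·√(log n)), let ṽ₁, …, ṽ_k be independent standard Gaussian random vectors in ℝⁿ, let W = span{v, ṽ₁, …, ṽ_k}, and fix an index i* with |v(i*)| = ‖v‖_∞. Then with probability at least 1 − γ₁·e^{−γ₂·n/2} − k·e^{−⌊c·√(n/log n)⌋} − k/n², the vector v/v(i*) is the unique minimizer of ‖z‖₁ over the set {z ∈ W : z(i*) = 1}. -/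

import Mathlib

/-!
Write `x = v / v istar`, `s = ‖v‖₀` and, for a coefficient vector `b`, `g = ∑ j, b j • ω j`. Every
`z ∈ W` with `z istar = 1` has the form `z = x + g - g(istar) x`. Splitting the `ℓ¹` norm over the
support `S` of `v` gives

  `‖z‖₁ ≥ ‖x‖₁ + ‖g‖₁ - 2 ‖g_S‖₁ - |g(istar)| ‖x‖₁`,

so it is enough that the last two terms are smaller than `‖g‖₁` for all `b ≠ 0`. Three events ensure
this:

* `‖g‖₁ ≥ (n / 32) ‖b‖₂` for all `b` (`le_l1_comb`);
* `‖g‖₂ ≤ 8 √n ‖b‖₂` for all `b` (`norm_comb_le`), whence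
  `‖g_S‖₁ ≤ √s ‖g‖₂ ≤ 8 √(s n) ‖b‖₂`, a small multiple of `n ‖b‖₂` because `s ≤ c n`;
* `|ω_j(istar)|² ≤ 12 log n` for all `j`, whence `|g(istar)| ‖x‖₁ ≤ 4 √(k log n) s ‖b‖₂`
  (`abs_comb_le`), again a small multiple of `n ‖b‖₂` by the sparsity assumption.

The deterministic conclusion is `recovery`. The third event fails with probability at most `k / n²`
(`bad_row`). The first two are checked on a `1/256`-net of the unit sphere of `ℝᵏ` (`exists_net`):
at a unit vector `b`, `g` is a standard Gaussian vector (`map_comb`), so Chernoff bounds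
(`l1_tail`, `sq_tail`) give failure probability at most `4 ^ (-n)` at each of the at most `2 ^ n` net points
(`bad_net`).
-/

open MeasureTheory ProbabilityTheory Real

/-- ℓ¹ norm of a vector in ℝⁿ. -/
noncomputable def l1 {n : ℕ} (x : Fin n → ℝ) : ℝ := ∑ i, |x i|

/-- ℓ⁰ "norm": number of nonzero entries. -/
noncomputable def l0 {n : ℕ} (x : Fin n → ℝ) : ℕ :=
  (Finset.univ.filter fun i => x i ≠ 0).card

/-- Law of a standard Gaussian random vector in ℝⁿ (i.i.d. N(0,1) entries). -/
noncomputable def stdGaussianVec (n : ℕ) : Measure (Fin n → ℝ) :=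
  Measure.pi fun _ => gaussianReal 0 1

/-! ### Gaussian tail bounds -/

instance (n : ℕ) : IsProbabilityMeasure (stdGaussianVec n) := by
  unfold stdGaussianVec; infer_instance

lemma gaussianPDFReal_std (y : ℝ) :
    gaussianPDFReal 0 1 y = (√(2 * π))⁻¹ * exp (-(1 / 2) * y ^ 2) := by
  simp only [gaussianPDFReal_def, NNReal.coe_one, mul_one, sub_zero]
  ring_nf

lemma two_le_sqrt_two_pi : 2 ≤ √(2 * π) := by
  apply Real.le_sqrt_of_sq_le
  nlinarith [Real.pi_gt_three]

lemma integral_exp_neg_abs : ∫ y : ℝ, exp (-8 * |y|) = 1 / 4 := by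
  rw [integral_comp_abs (f := fun x => exp (-8 * x)), integral_exp_mul_Ioi (by norm_num)]
  norm_num

lemma integrable_gaussian_exp_sq :
    Integrable (fun y : ℝ => exp (y ^ 2 / 4)) (gaussianReal 0 1) := by
  rw [gaussianReal_of_var_ne_zero 0 one_ne_zero,
    integrable_withDensity_iff (by fun_prop) (.of_forall fun _ => gaussianPDF_lt_top)]
  simp only [toReal_gaussianPDF, gaussianPDFReal_std]
  refine ((integrable_exp_neg_mul_sq (b := 1 / 4) (by norm_num)).const_mul
    (√(2 * π))⁻¹).congr (.of_forall fun y => ?_)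
  simp only
  rw [mul_left_comm, ← exp_add]
  ring_nf

/-- The exact value is `√2`. -/
lemma integral_gaussian_exp_sq :
    ∫ y, exp (y ^ 2 / 4) ∂(gaussianReal 0 1) ≤ 2 := by
  rw [integral_gaussianReal_eq_integral_smul one_ne_zero]
  have h : ∀ y : ℝ, gaussianPDFReal 0 1 y • exp (y ^ 2 / 4)
      = (√(2 * π))⁻¹ * exp (-(1 / 4) * y ^ 2) := fun y => by
    rw [gaussianPDFReal_std, smul_eq_mul, mul_assoc, ← exp_add]
    ring_nf
  simp only [h]
  rw [integral_const_mul, integral_gaussian, inv_mul_le_iff₀ (by positivity)]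
  apply Real.sqrt_le_iff.2 ⟨by positivity, ?_⟩
  rw [mul_pow, Real.sq_sqrt (by positivity)]
  linarith [pi_pos]

lemma integrable_gaussian_exp_abs :
    Integrable (fun y : ℝ => exp (-8 * |y|)) (gaussianReal 0 1) := by
  refine Integrable.of_bound (by fun_prop) 1 (.of_forall fun y => ?_)
  rw [Real.norm_eq_abs, abs_of_pos (exp_pos _), exp_le_one_iff]
  linarith [abs_nonneg y]

lemma integral_gaussian_exp_abs :
    ∫ y, exp (-8 * |y|) ∂(gaussianReal 0 1) ≤ 1 / 8 := by
  rw [integral_gaussianReal_eq_integral_smul one_ne_zero]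
  have hint : Integrable (fun y : ℝ => exp (-8 * |y|)) := by
    by_contra h
    have := integral_exp_neg_abs
    rw [integral_undef h] at this
    norm_num at this
  calc ∫ y, gaussianPDFReal 0 1 y • exp (-8 * |y|)
      ≤ ∫ y : ℝ, 1 / 2 * exp (-8 * |y|) := by
        refine integral_mono_of_nonneg (.of_forall fun y => ?_) (hint.const_mul _)
          (.of_forall fun y => ?_)
        · exact mul_nonneg (gaussianPDFReal_nonneg _ _ _) (exp_pos _).le
        · simp only [smul_eq_mul]
          gcongr
          rw [gaussianPDFReal_std, inv_mul_le_iff₀ (by positivity)]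
          have : exp (-(1 / 2) * y ^ 2) ≤ 1 := exp_le_one_iff.2 (by nlinarith)
          linarith [two_le_sqrt_two_pi]
    _ = 1 / 8 := by rw [integral_const_mul, integral_exp_neg_abs]; norm_num

/-- Exponential Markov inequality for a sum of i.i.d. functions of standard Gaussians. -/
lemma chernoff {n : ℕ} {φ : ℝ → ℝ}
    (hφ : Integrable (fun y => exp (φ y)) (gaussianReal 0 1)) {m : ℝ}
    (hm : ∫ y, exp (φ y) ∂(gaussianReal 0 1) ≤ m) (a : ℝ) :
    (stdGaussianVec n).real {y | a ≤ ∑ i, φ (y i)} ≤ exp (-a) * m ^ n := by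
  have hint : Integrable (fun y : Fin n → ℝ => ∏ i, exp (φ (y i))) (stdGaussianVec n) :=
    Integrable.fintype_prod (fun _ => hφ)
  have h := mul_meas_ge_le_integral_of_nonneg (μ := stdGaussianVec n)
    (.of_forall fun y => Finset.prod_nonneg fun i _ => (exp_pos (φ (y i))).le) hint (exp a)
  have e : ∫ y : Fin n → ℝ, ∏ i, exp (φ (y i)) ∂(stdGaussianVec n)
      = (∫ y, exp (φ y) ∂(gaussianReal 0 1)) ^ n := by
    simpa [stdGaussianVec] using integral_fintype_prod_eq_pow (ι := Fin n) (μ := gaussianReal 0 1)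
      (fun y => exp (φ y))
  rw [e] at h
  have h0 : 0 ≤ ∫ y, exp (φ y) ∂(gaussianReal 0 1) :=
    integral_nonneg fun y => (exp_pos _).le
  simp only [← exp_sum, exp_le_exp] at h
  rw [exp_neg, ← div_eq_inv_mul, le_div_iff₀' (exp_pos a)]
  exact h.trans (by gcongr)

/-- Small-ball estimate: `e^{n/2} (E e^{-8|g|})^n ≤ (2 · 1/8)^n`. -/
lemma l1_tail (n : ℕ) :
    (stdGaussianVec n).real {y | l1 y ≤ n / 16} ≤ (1 / 4) ^ n := by
  have h := chernoff (n := n) integrable_gaussian_exp_abs integral_gaussian_exp_abs (-(n / 2 : ℝ))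
  have hs : {y : Fin n → ℝ | l1 y ≤ n / 16} = {y | -(n / 2 : ℝ) ≤ ∑ i, -8 * |y i|} := by
    ext y
    simp only [Set.mem_ofPred_eq, l1, ← Finset.mul_sum]
    constructor <;> intro h <;> linarith
  rw [hs]
  refine h.trans ?_
  rw [neg_neg, show (n / 2 : ℝ) = n * (1 / 2) by ring, exp_nat_mul, ← mul_pow]
  gcongr
  have : exp (1 / 2 : ℝ) ≤ 2 := by
    have h1 : exp (1 / 2 : ℝ) ^ 2 = exp 1 := by rw [← exp_nat_mul]; norm_num
    nlinarith [exp_one_lt_d9, exp_pos (1 / 2 : ℝ)]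
  linarith

lemma exp_neg_four_le : exp (-4 : ℝ) ≤ 1 / 8 := by
  have : exp (-4 : ℝ) = (exp 1 ^ 4)⁻¹ := by rw [← exp_nat_mul, ← exp_neg]; norm_num
  rw [this, inv_le_comm₀ (by positivity) (by norm_num)]
  have h2 : (2 : ℝ) ≤ exp 1 := by linarith [exp_one_gt_d9]
  have := pow_le_pow_left₀ (by norm_num) h2 4
  norm_num at this ⊢; linarith

/-- Chi-square upper tail: `e^{-4n} (E e^{g²/4})^n ≤ (1/8 · 2)^n`. -/
lemma sq_tail (n : ℕ) :
    (stdGaussianVec n).real {y | 16 * n ≤ ∑ i, y i ^ 2} ≤ (1 / 4) ^ n := by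
  have h := chernoff (n := n) integrable_gaussian_exp_sq integral_gaussian_exp_sq (4 * n : ℝ)
  have hs : {y : Fin n → ℝ | (16 * n : ℝ) ≤ ∑ i, y i ^ 2}
      = {y | (4 * n : ℝ) ≤ ∑ i, y i ^ 2 / 4} := by
    ext y
    simp only [Set.mem_ofPred_eq, ← Finset.sum_div]
    constructor <;> intro h <;> linarith
  rw [hs]
  refine h.trans ?_
  rw [show -(4 * n : ℝ) = n * (-4) by ring, exp_nat_mul, ← mul_pow]
  gcongr
  linarith [exp_neg_four_le]

lemma entry_tail {n : ℕ} (hn : 2 ≤ n) :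
    (gaussianReal 0 1).real {y | 12 * log n ≤ y ^ 2} ≤ 1 / (n : ℝ) ^ 2 := by
  have hn0 : (0 : ℝ) < n := by positivity
  have h := mul_meas_ge_le_integral_of_nonneg
    (.of_forall fun y => (exp_pos (y ^ 2 / 4)).le) integrable_gaussian_exp_sq (exp (3 * log n))
  have hs : {y : ℝ | 12 * log n ≤ y ^ 2} = {y | 3 * log n ≤ y ^ 2 / 4} := by
    ext y
    simp only [Set.mem_ofPred_eq]
    constructor <;> intro h <;> linarith
  simp only [exp_le_exp] at h
  rw [hs]
  have h' := h.trans integral_gaussian_exp_sq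
  have e : exp (3 * log n) = (n : ℝ) ^ 3 := by
    rw [← exp_log hn0, ← exp_nat_mul, log_exp]; norm_num
  rw [e] at h'
  rw [le_div_iff₀ (by positivity)]
  have h2 : (2 : ℝ) ≤ n := by exact_mod_cast hn
  set p := (gaussianReal 0 1).real {y | 3 * log n ≤ y ^ 2 / 4}
  have hp : 0 ≤ p := measureReal_nonneg
  nlinarith [mul_le_mul_of_nonneg_left h2 (mul_nonneg hp (sq_nonneg (n : ℝ)))]

/-! ### The Gaussian matrix and nets of the sphere -/

/-- The linear map `b ↦ ∑ j, b j • ω j` given by the `n × k` matrix with columns `ω j`. Both sides carry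
the Euclidean norm, so that operator norm bounds apply; `.ofLp` recovers the plain vector. -/
noncomputable def comb {n k : ℕ} (ω : Fin k → Fin n → ℝ) :
    EuclideanSpace ℝ (Fin k) →ₗ[ℝ] EuclideanSpace ℝ (Fin n) where
  toFun b := WithLp.toLp 2 fun i => ∑ j, b j * ω j i
  map_add' a b := by ext i; simp [add_mul, Finset.sum_add_distrib]
  map_smul' c b := by ext i; simp [Finset.mul_sum, mul_assoc]

lemma comb_apply {n k : ℕ} (ω : Fin k → Fin n → ℝ) (b : EuclideanSpace ℝ (Fin k)) (i : Fin n) :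
    comb ω b i = ∑ j, b j * ω j i := rfl

lemma measurable_comb {n k : ℕ} (b : EuclideanSpace ℝ (Fin k)) :
    Measurable fun ω : Fin k → Fin n → ℝ => (comb ω b).ofLp := by
  simp only [comb, LinearMap.coe_mk, AddHom.coe_mk]
  fun_prop

lemma charFun_stdGaussianVec {n : ℕ} (t : EuclideanSpace ℝ (Fin n)) :
    charFun ((stdGaussianVec n).map (WithLp.toLp 2)) t = Complex.exp (-‖t‖ ^ 2 / 2) := by
  rw [stdGaussianVec, map_pi_eq_stdGaussian, charFun_stdGaussian]

/-- A combination of independent standard Gaussian vectors with a unit coefficient vector is again a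
standard Gaussian vector. The characteristic function at `t` factors as `∏ j, e^{-u_j² ‖t‖² / 2}`. -/
lemma map_comb {n k : ℕ} {u : EuclideanSpace ℝ (Fin k)} (hu : ‖u‖ = 1) :
    (Measure.pi fun _ : Fin k => stdGaussianVec n).map (fun ω => (comb ω u).ofLp)
      = stdGaussianVec n := by
  have key : (Measure.pi fun _ : Fin k => stdGaussianVec n).map (fun ω => comb ω u)
      = (stdGaussianVec n).map (WithLp.toLp 2) := by
    have hm : Measurable fun ω : Fin k → Fin n → ℝ => comb ω u :=
      (WithLp.measurable_toLp 2 _).comp (measurable_comb u)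
    apply Measure.ext_of_charFun
    ext t
    rw [charFun_stdGaussianVec, charFun_apply, integral_map hm.aemeasurable (by fun_prop)]
    have h1 : ∀ ω : Fin k → Fin n → ℝ, Complex.exp (inner ℝ (comb ω u) t * Complex.I)
        = ∏ j, Complex.exp (inner ℝ (WithLp.toLp 2 (ω j)) (u j • t) * Complex.I) := fun ω => by
      rw [← Complex.exp_sum, ← Finset.sum_mul, ← Complex.ofReal_sum]
      congr 3
      simp only [PiLp.inner_apply, comb_apply, PiLp.smul_apply, RCLike.inner_apply, conj_trivial,
        Finset.mul_sum, smul_eq_mul]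
      rw [Finset.sum_comm]
      refine Finset.sum_congr rfl fun j _ => Finset.sum_congr rfl fun i _ => by ring
    simp only [h1]
    rw [integral_fintype_prod_eq_prod (fun j (y : Fin n → ℝ) =>
      Complex.exp (inner ℝ (WithLp.toLp 2 y) (u j • t) * Complex.I))]
    have h2 : ∀ j, ∫ y, Complex.exp (inner ℝ (WithLp.toLp 2 y) (u j • t) * Complex.I)
        ∂(stdGaussianVec n) = Complex.exp (-(u j ^ 2 * ‖t‖ ^ 2 / 2 : ℝ)) := fun j => by
      have := charFun_stdGaussianVec (n := n) (u j • t)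
      rw [charFun_apply, integral_map (by fun_prop) (by fun_prop)] at this
      rw [this, norm_smul, ← Complex.ofReal_pow, mul_pow, Real.norm_eq_abs, sq_abs]
      push_cast
      ring_nf
    simp only [h2]
    rw [← Complex.exp_sum, Finset.sum_neg_distrib, ← Complex.ofReal_sum, ← Finset.sum_div,
      ← Finset.sum_mul, ← EuclideanSpace.real_norm_sq_eq, hu]
    push_cast
    ring_nf
  have := congrArg (Measure.map (WithLp.ofLp)) key
  have hm : Measurable fun ω : Fin k → Fin n → ℝ => comb ω u :=
    (WithLp.measurable_toLp 2 _).comp (measurable_comb u)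
  rw [Measure.map_map (by fun_prop) hm, Measure.map_map (by fun_prop) (by fun_prop)] at this
  simpa [Function.comp_def] using this

/-- The unit sphere of `ℝᵏ` has a `1/256`-net of at most `513 ^ k` points. A `1/256`-separated set of
maximal cardinality is such a net: the balls of radius `1/512` around its points are disjoint and
contained in the ball of radius `513/512`. -/
lemma exists_net (k : ℕ) :
    ∃ T : Finset (EuclideanSpace ℝ (Fin k)), (T.card : ℝ) ≤ 513 ^ k ∧ (∀ u ∈ T, ‖u‖ = 1) ∧
      ∀ b : EuclideanSpace ℝ (Fin k), ‖b‖ = 1 → ∃ u ∈ T, ‖b - u‖ ≤ 1 / 256 := by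
  classical
  let E := EuclideanSpace ℝ (Fin k)
  let P : Finset E → Prop := fun s =>
    (∀ u ∈ s, ‖u‖ = 1) ∧ ∀ c ∈ s, ∀ d ∈ s, c ≠ d → 1 / 256 ≤ ‖c - d‖
  have card_le : ∀ s, P s → (s.card : ℝ) ≤ 513 ^ k := by
    rintro s ⟨hs, h⟩
    let μ : Measure E := volume
    have D : Set.Pairwise (s : Set E) (Function.onFun Disjoint fun c => Metric.ball c (1 / 512)) := by
      rintro c hc d hd hcd
      apply Metric.ball_disjoint_ball
      rw [dist_eq_norm]
      linarith [h c hc d hd hcd]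
    have I : (s.card : ENNReal) * ENNReal.ofReal ((1 / 512) ^ k) * μ (Metric.ball 0 1) ≤
        ENNReal.ofReal ((513 / 512) ^ k) * μ (Metric.ball 0 1) :=
      calc
        _ = μ (⋃ c ∈ s, Metric.ball c (1 / 512)) := by
          rw [measure_biUnion_finset D fun c _ => measurableSet_ball]
          simp only [μ.addHaar_ball_of_pos _ (show (0 : ℝ) < 1 / 512 by norm_num)]
          simp [E, mul_assoc]
        _ ≤ μ (Metric.ball (0 : E) (513 / 512)) := by
          refine measure_mono (Set.iUnion₂_subset fun x hx => Metric.ball_subset_ball' ?_)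
          rw [dist_zero_right, hs x hx]
          norm_num
        _ = _ := by
          rw [μ.addHaar_ball_of_pos _ (show (0 : ℝ) < 513 / 512 by norm_num)]
          simp [E]
    have J := (ENNReal.mul_le_mul_iff_left
      (Metric.measure_ball_pos μ (0 : E) zero_lt_one).ne' measure_ball_lt_top.ne).1 I
    have K := ENNReal.toReal_le_of_le_ofReal (by positivity) J
    rw [ENNReal.toReal_mul, ENNReal.toReal_natCast, ENNReal.toReal_ofReal (by positivity),
      one_div, div_pow, inv_pow, ← div_eq_mul_inv] at K
    exact (div_le_div_iff_of_pos_right (by positivity)).1 K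
  obtain ⟨m, ⟨T, hT, rfl⟩, hmax⟩ : ∃ m, (∃ s, P s ∧ s.card = m) ∧
      ∀ m', (∃ s, P s ∧ s.card = m') → m' ≤ m := by
    have hb : BddAbove {m | ∃ s, P s ∧ s.card = m} := by
      refine ⟨513 ^ k, ?_⟩
      rintro _ ⟨s, hs, rfl⟩
      exact_mod_cast card_le s hs
    exact ⟨_, Nat.sSup_mem (s := {m | ∃ s, P s ∧ s.card = m}) ⟨0, ∅, by simp [P], rfl⟩ hb,
      fun m' hm' => le_csSup hb hm'⟩
  refine ⟨T, card_le T hT, hT.1, fun b hb => ?_⟩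
  by_contra! hc
  have hbT : b ∉ T := fun h => by
    have := hc b h
    norm_num at this
  have hP : P (insert b T) := by
    refine ⟨?_, ?_⟩
    · simpa [hb] using hT.1
    · intro c hc1 d hd1 hcd
      rcases Finset.mem_insert.1 hc1 with rfl | hc1' <;>
        rcases Finset.mem_insert.1 hd1 with rfl | hd1'
      · exact absurd rfl hcd
      · exact (hc d hd1').le
      · rw [norm_sub_rev]; exact (hc c hc1').le
      · exact hT.2 c hc1' d hd1' hcd
  have := hmax _ ⟨_, hP, rfl⟩
  rw [Finset.card_insert_of_notMem hbT] at this
  omega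

/-! ### Deterministic estimates -/

lemma sum_abs_le {n : ℕ} (S : Finset (Fin n)) (y : EuclideanSpace ℝ (Fin n)) :
    ∑ i ∈ S, |y i| ≤ √(S.card) * ‖y‖ := by
  refine abs_le_of_sq_le_sq' ?_ (by positivity) |>.2
  rw [mul_pow, Real.sq_sqrt (by positivity), EuclideanSpace.real_norm_sq_eq]
  calc (∑ i ∈ S, |y i|) ^ 2 ≤ S.card * ∑ i ∈ S, |y i| ^ 2 := sq_sum_le_card_mul_sum_sq
    _ ≤ S.card * ∑ i, y i ^ 2 := by
      simp only [sq_abs]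
      gcongr
      exact S.subset_univ

lemma l1_le {n : ℕ} (y : EuclideanSpace ℝ (Fin n)) : l1 y.ofLp ≤ √n * ‖y‖ := by
  simpa [l1] using sum_abs_le Finset.univ y

lemma l1_sub_le {n : ℕ} (x y : Fin n → ℝ) : l1 x - l1 y ≤ l1 (x + y) := by
  unfold l1
  rw [← Finset.sum_sub_distrib]
  refine Finset.sum_le_sum fun i _ => ?_
  have := abs_sub_abs_le_abs_sub (x i) (-y i)
  simpa using this

/-- Operator norm bound from a net: `‖A‖ ≤ max_T ‖A u‖ + ‖A‖ / 256` can be solved for `‖A‖`, since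
`‖A‖` is finite. -/
lemma norm_comb_le {n k : ℕ} {ω : Fin k → Fin n → ℝ} {T : Finset (EuclideanSpace ℝ (Fin k))}
    (hT : ∀ b : EuclideanSpace ℝ (Fin k), ‖b‖ = 1 → ∃ u ∈ T, ‖b - u‖ ≤ 1 / 256)
    (h2 : ∀ u ∈ T, ∑ i, comb ω u i ^ 2 ≤ 16 * n) (b : EuclideanSpace ℝ (Fin k)) :
    ‖comb ω b‖ ≤ 8 * √n * ‖b‖ := by
  set A := LinearMap.toContinuousLinearMap (comb ω) with hA
  have hAb : ∀ b, comb ω b = A b := fun _ => rfl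
  have hu : ∀ u ∈ T, ‖A u‖ ≤ 4 * √n := fun u huT => by
    refine abs_le_of_sq_le_sq' ?_ (by positivity) |>.2
    rw [mul_pow, Real.sq_sqrt (by positivity), EuclideanSpace.real_norm_sq_eq]
    have := h2 u huT
    simp only [hAb] at this
    linarith
  have h : ‖A‖ ≤ 4 * √n + ‖A‖ * (1 / 256) := by
    refine ContinuousLinearMap.opNorm_le_of_unit_norm (by positivity) fun b hb => ?_
    obtain ⟨u, huT, hbu⟩ := hT b hb
    calc ‖A b‖ = ‖A u + A (b - u)‖ := by rw [← map_add]; congr 2; abel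
      _ ≤ ‖A u‖ + ‖A (b - u)‖ := norm_add_le _ _
      _ ≤ _ := add_le_add (hu u huT) (A.le_opNorm_of_le hbu)
  have h' : ‖A‖ ≤ 8 * √n := by
    have : 0 ≤ √(n : ℝ) := by positivity
    linarith
  exact A.le_of_opNorm_le h' b

/-- The `ℓ¹` lower bound extends from the net to the whole sphere because moving to the nearest net
point changes the `ℓ¹` norm by at most `√n · 8√n / 256 = n / 32`; homogeneity does the rest. -/
lemma le_l1_comb {n k : ℕ} {ω : Fin k → Fin n → ℝ} {T : Finset (EuclideanSpace ℝ (Fin k))}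
    (hT : ∀ b : EuclideanSpace ℝ (Fin k), ‖b‖ = 1 → ∃ u ∈ T, ‖b - u‖ ≤ 1 / 256)
    (h1 : ∀ u ∈ T, n / 16 ≤ l1 (comb ω u).ofLp)
    (hup : ∀ b, ‖comb ω b‖ ≤ 8 * √n * ‖b‖) (b : EuclideanSpace ℝ (Fin k)) :
    n / 32 * ‖b‖ ≤ l1 (comb ω b).ofLp := by
  have hunit : ∀ b : EuclideanSpace ℝ (Fin k), ‖b‖ = 1 → (n : ℝ) / 32 ≤ l1 (comb ω b).ofLp := by
    intro b hb
    obtain ⟨u, huT, hbu⟩ := hT b hb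
    have e : (comb ω b).ofLp = (comb ω u).ofLp + (comb ω (b - u)).ofLp := by
      rw [map_sub]; simp
    have hn : √(n : ℝ) * √n = n := Real.mul_self_sqrt (by positivity)
    have h3 : l1 (comb ω (b - u)).ofLp ≤ n / 32 := calc
      _ ≤ √n * (8 * √n * (1 / 256)) := (l1_le _).trans (by
        gcongr
        exact (hup _).trans (by gcongr))
      _ = (√n * √n) / 32 := by ring
      _ = n / 32 := by rw [hn]
    rw [e]
    linarith [l1_sub_le (comb ω u).ofLp (comb ω (b - u)).ofLp, h1 u huT]
  rcases eq_or_ne b 0 with rfl | hb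
  · simp [l1]
  · have hb' : ‖b‖ ≠ 0 := norm_ne_zero_iff.2 hb
    have h := hunit (‖b‖⁻¹ • b) (by rw [norm_smul, norm_inv, norm_norm, inv_mul_cancel₀ hb'])
    have e : l1 (comb ω (‖b‖⁻¹ • b)).ofLp = ‖b‖⁻¹ * l1 (comb ω b).ofLp := by
      simp [l1, Finset.mul_sum, abs_mul]
    rw [e, ← div_eq_inv_mul, le_div_iff₀ (by positivity)] at h
    exact h

lemma abs_comb_le {n k : ℕ} {ω : Fin k → Fin n → ℝ} {i : Fin n}
    (hrow : ∀ j, ω j i ^ 2 ≤ 12 * log n) (b : EuclideanSpace ℝ (Fin k)) :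
    |comb ω b i| ≤ 4 * (√k * √(log n)) * ‖b‖ := by
  have hlog : 0 ≤ log n := log_natCast_nonneg n
  refine abs_le_of_sq_le_sq ?_ (by positivity)
  rw [comb_apply]
  calc (∑ j, b j * ω j i) ^ 2 ≤ (∑ j, b j ^ 2) * ∑ j, ω j i ^ 2 :=
        Finset.sum_mul_sq_le_sq_mul_sq _ _ _
    _ ≤ (∑ j, b j ^ 2) * ∑ j : Fin k, 12 * log n := by
        gcongr with j
        exact hrow j
    _ = 12 * (k * log n) * ‖b‖ ^ 2 := by
        rw [EuclideanSpace.real_norm_sq_eq]; simp; ring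
    _ ≤ 16 * (k * log n) * ‖b‖ ^ 2 := by gcongr; norm_num
    _ = (4 * (√k * √(log n)) * ‖b‖) ^ 2 := by
        rw [mul_pow, mul_pow, mul_pow, Real.sq_sqrt (by positivity), Real.sq_sqrt hlog]; norm_num

/-- The deterministic part: if `ω` satisfies the three typical bounds (`ℓ¹` lower bound, operator
norm bound, bounded row `istar`), then every feasible `z ≠ v / v istar` has strictly larger `ℓ¹` norm.
-/
lemma recovery {n k : ℕ} (hn : 3 ≤ n) (hk : 0 < k) {ω : Fin k → Fin n → ℝ}
    (hlow : ∀ b, n / 32 * ‖b‖ ≤ l1 (comb ω b).ofLp)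
    (hup : ∀ b, ‖comb ω b‖ ≤ 8 * √n * ‖b‖)
    {v : Fin n → ℝ} (hv : v ≠ 0)
    (hs : (l0 v : ℝ) ≤ 1 / 10 ^ 6 * n / (√k * √(log n)))
    {istar : Fin n} (hstar : ∀ i, |v i| ≤ |v istar|)
    (hrow : ∀ j, ω j istar ^ 2 ≤ 12 * log n)
    {z : Fin n → ℝ} (hz : z ∈ Submodule.span ℝ (insert v (Set.range ω)))
    (hz1 : z istar = 1) (hzv : z ≠ (v istar)⁻¹ • v) :
    l1 ((v istar)⁻¹ • v) < l1 z := by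
  have hn0 : (0 : ℝ) < n := by positivity
  have hv0 : v istar ≠ 0 := fun h => hv <| by
    ext i
    simpa [h] using hstar i
  -- `z = a • v + g`, and `z istar = 1` forces `z = x + g - g istar • x` with `x = v / v istar`.
  obtain ⟨a, w, hw, rfl⟩ := Submodule.mem_span_insert.1 hz
  obtain ⟨c, rfl⟩ := (Submodule.mem_span_range_iff_exists_fun ℝ).1 hw
  set b : EuclideanSpace ℝ (Fin k) := WithLp.toLp 2 c with hb
  set g := comb ω b with hg
  have hgi : ∀ i, (∑ j, c j • ω j) i = g i := fun i => by
    simp [hg, hb, comb_apply]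
  set x := (v istar)⁻¹ • v with hx
  have hvx : ∀ i, v i = v istar * x i := fun i => by
    simp [hx, hv0]
  have ha : a * v istar = 1 - g istar := by
    have := hz1
    simp only [Pi.add_apply, Pi.smul_apply, smul_eq_mul, hgi] at this
    linarith
  have hzi : ∀ i, (a • v + ∑ j, c j • ω j) i = (1 - g istar) * x i + g i := fun i => by
    rw [Pi.add_apply, hgi, Pi.smul_apply, smul_eq_mul, hvx i, ← mul_assoc, ha]
  have hb0 : b ≠ 0 := fun h0 => hzv <| by
    ext i
    rw [hzi, hg, h0]
    simp
  have hbpos : 0 < ‖b‖ := norm_pos_iff.2 hb0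
  have hx1 : ∀ i, |x i| ≤ 1 := fun i => by
    simp only [hx, Pi.smul_apply, smul_eq_mul, abs_mul, abs_inv]
    rw [inv_mul_le_iff₀ (abs_pos.2 hv0), mul_one]
    exact hstar i
  set S := Finset.univ.filter fun i => v i ≠ 0 with hS
  have hx0 : ∀ i ∉ S, x i = 0 := fun i hi => by
    have : v i = 0 := by simpa [hS] using hi
    simp [hx, this]
  have hl1x : l1 x ≤ l0 v := by
    calc l1 x = ∑ i ∈ S, |x i| :=
          (Finset.sum_subset S.subset_univ fun i _ hi => by simp [hx0 i hi]).symm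
      _ ≤ ∑ i ∈ S, (1 : ℝ) := Finset.sum_le_sum fun i _ => hx1 i
      _ = l0 v := by simp [l0, hS]
  -- Expanding around `x`: off the support of `v` the entries of `g` count in full, on the support
  -- they cost at most `|g i|`, while `‖g‖₁` credits them with `|g i|`; hence the factor `2`.
  have hmain : l1 x + l1 g.ofLp - |g istar| * l1 x - 2 * ∑ i ∈ S, |g i|
      ≤ l1 (a • v + ∑ j, c j • ω j) := by
    have e : ∑ i ∈ S, |g i| = ∑ i, if i ∈ S then |g i| else 0 := by simp
    unfold l1
    rw [e, Finset.mul_sum, Finset.mul_sum, ← Finset.sum_add_distrib, ← Finset.sum_sub_distrib,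
      ← Finset.sum_sub_distrib]
    refine Finset.sum_le_sum fun i _ => ?_
    rw [hzi]
    by_cases hi : i ∈ S
    · simp only [hi, if_true]
      have h1 : |x i| ≤ |(1 - g istar) * x i + g i| + |g istar| * |x i| + |g i| := calc
        |x i| = |((1 - g istar) * x i + g i) + g istar * x i - g i| := by congr 1; ring
        _ ≤ _ := by
          rw [← abs_mul]
          exact (abs_sub _ _).trans (by gcongr; exact abs_add_le _ _)
      linarith
    · simp [hi, hx0 i hi]
  have hlog : 1 ≤ log n := by
    rw [Real.le_log_iff_exp_le hn0]
    have : (3 : ℝ) ≤ n := by exact_mod_cast hn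
    linarith [exp_one_lt_d9]
  have hk1 : (1 : ℝ) ≤ √k := Real.one_le_sqrt.2 (by exact_mod_cast hk)
  have hl1 : (1 : ℝ) ≤ √(log n) := Real.one_le_sqrt.2 hlog
  have hD : 1 ≤ √k * √(log n) := one_le_mul_of_one_le_of_one_le hk1 hl1
  have hsD : l0 v * (√k * √(log n)) ≤ 1 / 10 ^ 6 * n := (le_div_iff₀ (by linarith)).1 hs
  have hs' : (l0 v : ℝ) ≤ 1 / 10 ^ 6 * n :=
    (le_mul_of_one_le_right (Nat.cast_nonneg _) hD).trans hsD
  have hsqrt : √(l0 v) ≤ 1 / 1000 * √n := by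
    refine Real.sqrt_le_iff.2 ⟨by positivity, ?_⟩
    rw [mul_pow, Real.sq_sqrt hn0.le]
    linarith
  have hS1 : ∑ i ∈ S, |g i| ≤ 8 / 1000 * n * ‖b‖ := calc
    _ ≤ √(l0 v) * ‖g‖ := sum_abs_le S g
    _ ≤ (1 / 1000 * √n) * (8 * √n * ‖b‖) := by gcongr; exact hup b
    _ = 8 / 1000 * (√n * √n) * ‖b‖ := by ring
    _ = _ := by rw [Real.mul_self_sqrt hn0.le]
  have hg1 : |g istar| * l1 x ≤ 4 / 10 ^ 6 * n * ‖b‖ := calc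
    _ ≤ (4 * (√k * √(log n)) * ‖b‖) * l0 v := by
      gcongr
      · exact Finset.sum_nonneg fun i _ => abs_nonneg (x i)
      · exact abs_comb_le hrow b
    _ = 4 * ‖b‖ * (l0 v * (√k * √(log n))) := by ring
    _ ≤ 4 * ‖b‖ * (1 / 10 ^ 6 * n) := by gcongr
    _ = _ := by ring
  have hnb : 0 < n * ‖b‖ := by positivity
  linarith [hlow b]

/-! ### Probability of the exceptional events -/

/-- Union bound over a net. The event has probability at most `4 ^ (-n)` at each net point, and since
`k ≤ n / 32` the net has at most `513 ^ k ≤ 2 ^ (10 k) ≤ 2 ^ n` points. -/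
lemma bad_net {n k : ℕ} {T : Finset (EuclideanSpace ℝ (Fin k))} (hk : (k : ℝ) ≤ n / 32)
    (hT : (T.card : ℝ) ≤ 513 ^ k) (hT1 : ∀ u ∈ T, ‖u‖ = 1)
    {B : Set (Fin n → ℝ)} (hB : MeasurableSet B) (hp : (stdGaussianVec n).real B ≤ (1 / 4) ^ n) :
    (Measure.pi fun _ : Fin k => stdGaussianVec n).real
      (⋃ u ∈ T, {ω | (comb ω u).ofLp ∈ B}) ≤ exp (-n / 2) := by
  have h1 : ∀ u ∈ T, (Measure.pi fun _ : Fin k => stdGaussianVec n).real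
      {ω | (comb ω u).ofLp ∈ B} ≤ (1 / 4) ^ n := fun u hu => by
    have := map_measureReal_apply (μ := Measure.pi fun _ : Fin k => stdGaussianVec n)
      (measurable_comb u) hB
    rw [map_comb (hT1 u hu)] at this
    rw [this] at hp
    exact hp
  have hcard : (T.card : ℝ) ≤ 2 ^ n := by
    have h10 : 10 * k ≤ n := by
      have : (10 * k : ℝ) ≤ n := by
        have : (0 : ℝ) ≤ k := by positivity
        linarith
      exact_mod_cast this
    calc (T.card : ℝ) ≤ 513 ^ k := hT
      _ ≤ (2 ^ 10) ^ k := by gcongr; norm_num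
      _ = 2 ^ (10 * k) := by rw [pow_mul]
      _ ≤ 2 ^ n := pow_le_pow_right₀ (by norm_num) h10
  calc _ ≤ ∑ u ∈ T, (Measure.pi fun _ : Fin k => stdGaussianVec n).real
        {ω | (comb ω u).ofLp ∈ B} := measureReal_biUnion_finset_le _ _
    _ ≤ ∑ u ∈ T, (1 / 4 : ℝ) ^ n := Finset.sum_le_sum h1
    _ = T.card * (1 / 4) ^ n := by simp
    _ ≤ 2 ^ n * (1 / 4) ^ n := by gcongr
    _ = (1 / 2) ^ n := by rw [← mul_pow]; norm_num
    _ ≤ exp (-1 / 2) ^ n := by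
      gcongr
      linarith [add_one_le_exp (-1 / 2 : ℝ)]
    _ = exp (-n / 2) := by rw [← exp_nat_mul]; ring_nf

/-- Union bound over the `k` entries of row `i`. -/
lemma bad_row {n : ℕ} (k : ℕ) (hn : 2 ≤ n) (i : Fin n) :
    (Measure.pi fun _ : Fin k => stdGaussianVec n).real
      (⋃ j, {ω | 12 * log n ≤ ω j i ^ 2}) ≤ k / (n : ℝ) ^ 2 := by
  have h1 : ∀ j, (Measure.pi fun _ : Fin k => stdGaussianVec n).real
      {ω | 12 * log n ≤ ω j i ^ 2} ≤ 1 / (n : ℝ) ^ 2 := fun j => by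
    have m1 := measurePreserving_eval (fun _ : Fin k => stdGaussianVec n) j
    have m2 := measurePreserving_eval (fun _ : Fin n => gaussianReal 0 1) i
    have := (m2.comp m1).measureReal_preimage (s := {y | 12 * log n ≤ y ^ 2})
      (measurableSet_le (by fun_prop) (by fun_prop)).nullMeasurableSet
    exact this.trans_le (entry_tail hn)
  calc _ ≤ ∑ j, (Measure.pi fun _ : Fin k => stdGaussianVec n).real
        {ω | 12 * log n ≤ ω j i ^ 2} := measureReal_iUnion_fintype_le _
    _ ≤ ∑ j : Fin k, 1 / (n : ℝ) ^ 2 := Finset.sum_le_sum fun j _ => h1 j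
    _ = k / (n : ℝ) ^ 2 := by simp [div_eq_mul_inv]

/-- There exist universal constants `c, γ₁, γ₂ > 0` such that for all
sufficiently large `n`: if `k` is a positive integer with `k ≤ n/32`, `v ∈ ℝⁿ` is nonzero with
`‖v‖₀ ≤ c n / (√k √(log n))`, `ṽ₁, …, ṽ_k` are i.i.d. standard Gaussian vectors in ℝⁿ,
`W = span{v, ṽ₁, …, ṽ_k}`, and `i*` is an index with `|v(i*)| = ‖v‖_∞`, then with probability
at least `1 − γ₁ e^{−γ₂ n/2} − k e^{−⌊c √(n/log n)⌋} − k/n²`, the vector `v / v(i*)` is the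
unique minimizer of `‖z‖₁` over `{z ∈ W : z(i*) = 1}`. -/
theorem exact_recovery_scaling_law :
    ∃ c γ₁ γ₂ : ℝ, 0 < c ∧ 0 < γ₁ ∧ 0 < γ₂ ∧ ∃ N : ℕ, ∀ n : ℕ, N ≤ n →
      ∀ k : ℕ, 0 < k → (k : ℝ) ≤ (n : ℝ) / 32 →
      ∀ v : Fin n → ℝ, v ≠ 0 →
      (l0 v : ℝ) ≤ c * n / (Real.sqrt k * Real.sqrt (Real.log n)) →
      ∀ istar : Fin n, (∀ i, |v i| ≤ |v istar|) →
      (Measure.pi fun _ : Fin k => stdGaussianVec n)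
        {ω : Fin k → Fin n → ℝ |
          (v istar)⁻¹ • v ∈ Submodule.span ℝ (insert v (Set.range ω)) ∧
          ((v istar)⁻¹ • v) istar = 1 ∧
          ∀ z : Fin n → ℝ, z ∈ Submodule.span ℝ (insert v (Set.range ω)) →
            z istar = 1 → z ≠ (v istar)⁻¹ • v →
            l1 ((v istar)⁻¹ • v) < l1 z} ≥
      ENNReal.ofReal (1 - γ₁ * Real.exp (-γ₂ * n / 2)
        - k * Real.exp (-(⌊c * Real.sqrt ((n : ℝ) / Real.log n)⌋₊ : ℝ))
        - (k : ℝ) / (n : ℝ) ^ 2) := by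
  refine ⟨1 / 10 ^ 6, 2, 1, by norm_num, by norm_num, by norm_num, 3, ?_⟩
  intro n hn k hk hkn v hv hs istar hstar
  set μ := Measure.pi fun _ : Fin k => stdGaussianVec n
  set G := {ω : Fin k → Fin n → ℝ |
          (v istar)⁻¹ • v ∈ Submodule.span ℝ (insert v (Set.range ω)) ∧
          ((v istar)⁻¹ • v) istar = 1 ∧
          ∀ z : Fin n → ℝ, z ∈ Submodule.span ℝ (insert v (Set.range ω)) →
            z istar = 1 → z ≠ (v istar)⁻¹ • v →
            l1 ((v istar)⁻¹ • v) < l1 z} with hG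
  have hv0 : v istar ≠ 0 := fun h => hv <| by
    ext i
    simpa [h] using hstar i
  obtain ⟨T, hcard, hT1, hT⟩ := exists_net k
  set B₁ := ⋃ u ∈ T, {ω : Fin k → Fin n → ℝ | (comb ω u).ofLp ∈ {y | l1 y ≤ n / 16}} with hB₁
  set B₂ := ⋃ u ∈ T, {ω : Fin k → Fin n → ℝ | (comb ω u).ofLp ∈ {y | (16 * n : ℝ) ≤ ∑ i, y i ^ 2}}
    with hB₂
  set B₃ := ⋃ j, {ω : Fin k → Fin n → ℝ | 12 * log n ≤ ω j istar ^ 2} with hB₃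
  have hb₁ : μ.real B₁ ≤ exp (-n / 2) :=
    bad_net hkn hcard hT1 (measurableSet_le (by unfold l1; fun_prop) (by fun_prop)) (l1_tail n)
  have hb₂ : μ.real B₂ ≤ exp (-n / 2) :=
    bad_net hkn hcard hT1 (measurableSet_le (by fun_prop) (by fun_prop)) (sq_tail n)
  have hb₃ : μ.real B₃ ≤ k / (n : ℝ) ^ 2 := bad_row k (by omega) istar
  -- `G` need not be known to be measurable: subadditivity of the outer measure suffices below.
  have hcover : Set.univ ⊆ G ∪ (B₁ ∪ B₂ ∪ B₃) := by
    intro ω _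
    by_cases hω : ω ∈ B₁ ∪ B₂ ∪ B₃
    · exact Or.inr hω
    left
    simp only [hB₁, hB₂, hB₃, Set.mem_union, Set.mem_iUnion, Set.mem_ofPred_eq, not_or,
      not_exists, not_le] at hω
    obtain ⟨⟨h1, h2⟩, h3⟩ := hω
    have hup := norm_comb_le hT fun u hu => (h2 u hu).le
    have hlow := le_l1_comb hT (fun u hu => (h1 u hu).le) hup
    refine ⟨Submodule.smul_mem _ _ (Submodule.subset_span (Set.mem_insert _ _)), ?_, ?_⟩
    · simp [hv0]
    · intro z hz hz1 hzv
      exact recovery hn hk hlow hup hv hs hstar (fun j => (h3 j).le) hz hz1 hzv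
  have htot : 1 ≤ μ.real G + (μ.real B₁ + μ.real B₂ + μ.real B₃) := calc
    (1 : ℝ) = μ.real Set.univ := by simp
    _ ≤ μ.real (G ∪ (B₁ ∪ B₂ ∪ B₃)) := measureReal_mono hcover
    _ ≤ μ.real G + μ.real (B₁ ∪ B₂ ∪ B₃) := measureReal_union_le _ _
    _ ≤ _ := by
      gcongr
      exact (measureReal_union_le _ _).trans (by gcongr; exact measureReal_union_le _ _)
  -- The term `k e^{-⌊⋯⌋}` only weakens the claimed bound; its sign is all that matters.
  have hdrop : 0 ≤ k * exp (-(⌊1 / 10 ^ 6 * √((n : ℝ) / log n)⌋₊ : ℝ)) := by positivity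
  refine (ENNReal.ofReal_le_iff_le_toReal (measure_ne_top _ _)).2 ?_
  change _ ≤ μ.real G
  rw [show -1 * (n : ℝ) / 2 = -n / 2 by ring]
  linarith
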